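/- arXiv:1011.3471 — 2 statements merged into one kernel-verified Lean document; each statement's English description precedes it below -/
import Mathlib

section
/- For a Hopf algebra H over k with involutive antipode (S² = id), the Connes–Moscovici cocyclic operator τ_n(h^1 ⊗⋯⊗ h^n) = S(h^1)_{(1)}h^2 ⊗ ⋯ ⊗ S(h^1)_{(n-1)}h^n ⊗ S(h^1)_{(n)} on H^{⊗n} satisfies τ_n^{n+1} = id. -/
/-!
STATEMENT 12: For a Hopf algebra `H` over `k` with involutive antipode (`S² = id`), the
Connes–Moscovici cocyclic operator
`τ_n(h¹ ⊗ ⋯ ⊗ hⁿ) = S(h¹)_{(1)}h² ⊗ ⋯ ⊗ S(h¹)_{(n-1)}hⁿ ⊗ S(h¹)_{(n)}`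
on `H^{⊗n}` satisfies `τ_n^{n+1} = id`.

We model the tensor powers recursively: `TPow 0 = k` and `TPow (n+1) = H ⊗[k] TPow n`
(so `TPow n ≅ H^{⊗n}`), and build `τ` on `TPow (n+1)` from the iterated comultiplication,
the antipode, and factorwise multiplication.
-/

open TensorProduct LinearMap

universe u
variable (k H : Type u) [CommRing k] [Ring H] [HopfAlgebra k H]

/-- Tensor powers of `H` over `k` : `TPowM n ≅ H^{⊗ n}` (as an object of `ModuleCat k`,
so that the recursion carries its module structure along). -/
noncomputable def TPowM : ℕ → ModuleCat.{u} k
  | 0 => ModuleCat.of k k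
  | n + 1 => ModuleCat.of k (H ⊗[k] TPowM n)

/-- Appending the unit `1 : H` as a last tensor factor: `x ↦ x ⊗ 1`. -/
noncomputable def appEnd : ∀ n : ℕ, TPowM k H n →ₗ[k] TPowM k H (n + 1)
  | 0 => (TensorProduct.mk k H k 1 : k →ₗ[k] H ⊗[k] k)
  | n + 1 => (LinearMap.lTensor H (appEnd n) :
      H ⊗[k] TPowM k H n →ₗ[k] H ⊗[k] TPowM k H (n + 1))

/-- The iterated comultiplication `Δ^{n-1} : H → H^{⊗ n}` (with `Δ^{-1} := ε`). -/
noncomputable def comulPow : ∀ n : ℕ, H →ₗ[k] TPowM k H n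
  | 0 => Coalgebra.counit
  | n + 1 =>
      ((TensorProduct.map LinearMap.id (comulPow n) :
          H ⊗[k] H →ₗ[k] H ⊗[k] TPowM k H n) ∘ₗ Coalgebra.comul)

/-- Factorwise multiplication `H^{⊗n} ⊗ H^{⊗n} → H^{⊗n}`. -/
noncomputable def mulPow : ∀ n : ℕ, TPowM k H n ⊗[k] TPowM k H n →ₗ[k] TPowM k H n
  | 0 => LinearMap.mul' k k
  | n + 1 =>
      ((TensorProduct.map (LinearMap.mul' k H) (mulPow n) :
          (H ⊗[k] H) ⊗[k] (TPowM k H n ⊗[k] TPowM k H n) →ₗ[k] H ⊗[k] TPowM k H n) ∘ₗ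
        (TensorProduct.tensorTensorTensorComm k H (TPowM k H n) H (TPowM k H n)).toLinearMap)

/-- The Connes–Moscovici cocyclic operator
`τ(h ⊗ x) = Δⁿ(S h) ⋆ (x ⊗ 1)` (factorwise product) on `TPow (n+1) = H^{⊗(n+1)}`. -/
noncomputable def cmTau (n : ℕ) : TPowM k H (n + 1) →ₗ[k] TPowM k H (n + 1) :=
  (mulPow k H (n + 1)) ∘ₗ
    (TensorProduct.map ((comulPow k H (n + 1)) ∘ₗ (HopfAlgebra.antipode (R := k)))
        (appEnd k H n) :
      H ⊗[k] TPowM k H n →ₗ[k] TPowM k H (n + 1) ⊗[k] TPowM k H (n + 1))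

/-!
Write `h · v` for the action of `H` on a module, diagonal on tensor products. The map
`p (a ⊗ x) = S(a) · x` identifies the coinvariants of `H ⊗ H^{⊗(n+1)}` with `H^{⊗(n+1)}`, with
section `x ↦ 1 ⊗ x`. The flip `W ⊗ V → V ⊗ W` is not equivariant, but it does descend to
coinvariants when `S² = id`: there `h · v ⊗ w` and `v ⊗ S(h) · w` agree, so that
`h₍₂₎ · v ⊗ h₍₁₎ · w` becomes `v ⊗ S(h₍₂₎) h₍₁₎ · w = ε(h) v ⊗ w`. Hence the cyclic rotation of
`H^{⊗(n+2)}`, whose order divides `n + 2`, descends along `p`, and the induced operator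
`x ↦ p (rotation (1 ⊗ x))` is `τ`.
-/

open Coalgebra HopfAlgebra WithConv

section Actions

variable {R A U V W Z : Type*} [CommSemiring R] [Semiring A]
  [AddCommMonoid U] [Module R U] [AddCommMonoid V] [Module R V]
  [AddCommMonoid W] [Module R W] [AddCommMonoid Z] [Module R Z]

section Bialgebra

variable [Bialgebra R A]

/-- The diagonal action `a · (v ⊗ w) = a₍₁₎ · v ⊗ a₍₂₎ · w` of a bialgebra on a tensor product of
two modules. Module structures are encoded by algebra maps to endomorphism rings, because `A ⊗ W`
already carries the instance for multiplication on its left factor. -/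
noncomputable def tensorAction (ρ : A →ₐ[R] Module.End R V) (ρ' : A →ₐ[R] Module.End R W) :
    A →ₐ[R] Module.End R (V ⊗[R] W) :=
  (Module.endTensorEndAlgHom (R := R) (S := R) (A := R)).comp
    ((Algebra.TensorProduct.map ρ ρ').comp (Bialgebra.comulAlgHom R A))

/-- The trivial action of a bialgebra, through its counit. -/
noncomputable def counitAction (R A V : Type*) [CommSemiring R] [Semiring A] [Bialgebra R A]
    [AddCommMonoid V] [Module R V] : A →ₐ[R] Module.End R V :=
  (Algebra.ofId R (Module.End R V)).comp (Bialgebra.counitAlgHom R A)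

lemma tensorAction_tmul (ρ : A →ₐ[R] Module.End R V) (ρ' : A →ₐ[R] Module.End R W)
    (a : A) (v : V) (w : W) :
    tensorAction ρ ρ' a (v ⊗ₜ w) =
      TensorProduct.map (ρ.toLinearMap.flip v) (ρ'.toLinearMap.flip w) (comul (R := R) a) := by
  simp only [tensorAction, AlgHom.comp_apply, Bialgebra.comulAlgHom_apply]
  induction comul (R := R) a with
  | zero => simp only [map_zero, LinearMap.zero_apply]
  | add x y hx hy => simp only [map_add, LinearMap.add_apply, hx, hy]
  | tmul x y => rfl

lemma tensorAction_tmul_eq_sum (ρ : A →ₐ[R] Module.End R V) (ρ' : A →ₐ[R] Module.End R W)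
    {ι : Type*} {a : A} (r : Repr R a ι) (v : V) (w : W) :
    tensorAction ρ ρ' a (v ⊗ₜ w) = ∑ i ∈ r.index, ρ (r.left i) v ⊗ₜ[R] ρ' (r.right i) w := by
  rw [tensorAction_tmul, ← r.eq, map_sum]
  rfl

lemma toConv_tensorAction (ρ : A →ₐ[R] Module.End R V) (ρ' : A →ₐ[R] Module.End R W) :
    toConv (tensorAction ρ ρ').toLinearMap =
      toConv ((Module.End.rTensorAlgHom R V W).comp ρ).toLinearMap *
        toConv ((Module.End.lTensorAlgHom R W V).comp ρ').toLinearMap := by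
  refine WithConv.ext (LinearMap.ext fun a ↦ TensorProduct.ext' fun v w ↦ ?_)
  rw [(ℛ R a).convMul_apply, LinearMap.sum_apply]
  exact tensorAction_tmul_eq_sum ρ ρ' (ℛ R a) v w

/-- `f` is a morphism of modules for the actions `ρ` and `ρ'`. -/
def IsEquivariant (ρ : A →ₐ[R] Module.End R V) (ρ' : A →ₐ[R] Module.End R W)
    (f : V →ₗ[R] W) : Prop :=
  ∀ a, f ∘ₗ ρ a = ρ' a ∘ₗ f

lemma IsEquivariant.comp {ρ : A →ₐ[R] Module.End R U} {ρ' : A →ₐ[R] Module.End R V}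
    {ρ'' : A →ₐ[R] Module.End R W} {g : V →ₗ[R] W} {f : U →ₗ[R] V}
    (hg : IsEquivariant ρ' ρ'' g) (hf : IsEquivariant ρ ρ' f) : IsEquivariant ρ ρ'' (g ∘ₗ f) :=
  fun a ↦ by rw [LinearMap.comp_assoc, hf a, ← LinearMap.comp_assoc, hg a, LinearMap.comp_assoc]

lemma IsEquivariant.lTensor {ρ : A →ₐ[R] Module.End R V} {ρ' : A →ₐ[R] Module.End R W}
    {f : V →ₗ[R] W} (hf : IsEquivariant ρ ρ' f) (σ : A →ₐ[R] Module.End R U) :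
    IsEquivariant (tensorAction σ ρ) (tensorAction σ ρ') (f.lTensor U) := by
  refine fun a ↦ TensorProduct.ext' fun u v ↦ ?_
  have hfv (b : A) : f (ρ b v) = ρ' b (f v) := LinearMap.congr_fun (hf b) v
  simp only [LinearMap.comp_apply, LinearMap.lTensor_tmul, map_sum, hfv,
    tensorAction_tmul_eq_sum _ _ (ℛ R a)]

lemma isEquivariant_assoc (ρ : A →ₐ[R] Module.End R U) (ρ' : A →ₐ[R] Module.End R V)
    (ρ'' : A →ₐ[R] Module.End R W) :
    IsEquivariant (tensorAction (tensorAction ρ ρ') ρ'') (tensorAction ρ (tensorAction ρ' ρ''))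
      (TensorProduct.assoc R U V W).toLinearMap := by
  refine fun a ↦ TensorProduct.ext_threefold fun u v w ↦ ?_
  have coassoc := congr(TensorProduct.map (ρ.toLinearMap.flip u)
      (TensorProduct.map (ρ'.toLinearMap.flip v) (ρ''.toLinearMap.flip w))
    $(sum_tmul_tmul_eq (ℛ R a) (fun i ↦ ℛ R ((ℛ R a).left i)) (fun i ↦ ℛ R ((ℛ R a).right i))))
  simpa [tensorAction_tmul_eq_sum _ _ (ℛ R _), TensorProduct.sum_tmul, TensorProduct.tmul_sum]
    using coassoc

lemma toConv_comp_counitAction {B : Type*} [Semiring B] [Algebra R B]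
    (φ : Module.End R V →ₐ[R] B) : toConv (φ.comp (counitAction R A V)).toLinearMap = 1 := by
  ext a
  exact φ.commutes _

lemma tensorAction_counitAction_left (ρ : A →ₐ[R] Module.End R V) (a : A) :
    tensorAction (counitAction R A U) ρ a = (ρ a).lTensor U := by
  have := toConv_tensorAction (counitAction R A U) ρ
  rw [toConv_comp_counitAction, one_mul] at this
  exact congr($this a)

lemma tensorAction_counitAction_right (ρ : A →ₐ[R] Module.End R V) (a : A) :
    tensorAction ρ (counitAction R A U) a = (ρ a).rTensor U := by
  have := toConv_tensorAction ρ (counitAction R A U)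
  rw [toConv_comp_counitAction, mul_one] at this
  exact congr($this a)

lemma isEquivariant_comm_counitAction (ρ : A →ₐ[R] Module.End R V) :
    IsEquivariant (tensorAction (counitAction R A U) ρ) (tensorAction ρ (counitAction R A U))
      (TensorProduct.comm R U V).toLinearMap := by
  intro a
  rw [tensorAction_counitAction_left, tensorAction_counitAction_right]
  exact TensorProduct.ext' fun u v ↦ rfl

/-- `q (a · v) = ε(a) q v`, that is, `q` factors through the coinvariants of the action `ρ`. -/
def IsActionInvariant (ρ : A →ₐ[R] Module.End R V) (q : V →ₗ[R] Z) : Prop :=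
  ∀ a, q ∘ₗ ρ a = counit (R := R) a • q

lemma IsActionInvariant.comp {ρ : A →ₐ[R] Module.End R V} {ρ' : A →ₐ[R] Module.End R W}
    {q : W →ₗ[R] Z} {f : V →ₗ[R] W} (hq : IsActionInvariant ρ' q) (hf : IsEquivariant ρ ρ' f) :
    IsActionInvariant ρ (q ∘ₗ f) :=
  fun a ↦ by rw [LinearMap.comp_assoc, hf a, ← LinearMap.comp_assoc, hq a, LinearMap.smul_comp]

end Bialgebra

variable [HopfAlgebra R A]

lemma toConv_mul_toConv_comp_antipode {B : Type*} [Semiring B] [Algebra R B] (φ : A →ₐ[R] B) :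
    toConv φ.toLinearMap * toConv (φ.toLinearMap ∘ₗ antipode R) = 1 := by
  have := LinearMap.algHom_comp_convMul_distrib φ (toConv LinearMap.id) (toConv (antipode R))
  rw [LinearMap.id_mul_antipode] at this
  apply ofConv_injective
  refine this.symm.trans ?_
  ext a
  simp

lemma toConv_tensorAction_mul_antipode (ρ : A →ₐ[R] Module.End R V)
    (ρ' : A →ₐ[R] Module.End R W) :
    toConv (tensorAction ρ ρ').toLinearMap *
        toConv (((Module.End.lTensorAlgHom R W V).comp ρ').toLinearMap ∘ₗ antipode R) =
      toConv ((Module.End.rTensorAlgHom R V W).comp ρ).toLinearMap := by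
  rw [toConv_tensorAction, mul_assoc, toConv_mul_toConv_comp_antipode, mul_one]

lemma sum_tensorAction_tmul_antipode (ρ : A →ₐ[R] Module.End R V) (ρ' : A →ₐ[R] Module.End R W)
    {ι : Type*} {a : A} (r : Repr R a ι) (v : V) (w : W) :
    ∑ i ∈ r.index, tensorAction ρ ρ' (r.left i) (v ⊗ₜ ρ' (antipode R (r.right i)) w) =
      ρ a v ⊗ₜ[R] w := by
  have := congr($(toConv_tensorAction_mul_antipode ρ ρ') a (v ⊗ₜ w))
  simp only [r.convMul_apply, LinearMap.sum_apply] at this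
  exact this

lemma IsActionInvariant.apply_action_tmul {ρ : A →ₐ[R] Module.End R V} {ρ' : A →ₐ[R] Module.End R W}
    {q : V ⊗[R] W →ₗ[R] Z} (hq : IsActionInvariant (tensorAction ρ ρ') q) (a : A) (v : V) (w : W) :
    q (ρ a v ⊗ₜ w) = q (v ⊗ₜ ρ' (antipode R a) w) := by
  have hq' (b : A) (x : V ⊗[R] W) : q (tensorAction ρ ρ' b x) = counit (R := R) b • q x :=
    LinearMap.congr_fun (hq b) x
  conv_rhs => rw [← sum_counit_smul (ℛ R a)]
  rw [← sum_tensorAction_tmul_antipode ρ ρ' (ℛ R a)]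
  simp [hq', TensorProduct.tmul_sum, LinearMap.sum_apply]

lemma sum_antipode_right_mul_left (hS : antipode R ∘ₗ antipode R = (LinearMap.id : A →ₗ[R] A))
    {ι : Type*} {a : A} (r : Repr R a ι) :
    ∑ i ∈ r.index, antipode R (r.right i) * r.left i = algebraMap R A (counit (R := R) a) := by
  have hS' (b : A) : antipode R (antipode R b) = b := LinearMap.congr_fun hS b
  have := congr(antipode R $(sum_antipode_mul_eq_smul (R := R) r))
  simpa [antipode_mul_antidistrib, hS', Algebra.algebraMap_eq_smul_one] using this

lemma IsActionInvariant.comp_comm (hS : antipode R ∘ₗ antipode R = (LinearMap.id : A →ₗ[R] A))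
    {ρ : A →ₐ[R] Module.End R V} {ρ' : A →ₐ[R] Module.End R W}
    {q : V ⊗[R] W →ₗ[R] Z} (hq : IsActionInvariant (tensorAction ρ ρ') q) :
    IsActionInvariant (tensorAction ρ' ρ) (q ∘ₗ (TensorProduct.comm R W V).toLinearMap) := by
  refine fun a ↦ TensorProduct.ext' fun w v ↦ ?_
  calc q (TensorProduct.comm R W V (tensorAction ρ' ρ a (w ⊗ₜ v)))
    _ = ∑ i ∈ (ℛ R a).index, q (ρ ((ℛ R a).right i) v ⊗ₜ ρ' ((ℛ R a).left i) w) := by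
      simp only [tensorAction_tmul_eq_sum ρ' ρ (ℛ R a), map_sum, TensorProduct.comm_tmul]
    _ = q (v ⊗ₜ ρ' (∑ i ∈ (ℛ R a).index, antipode R ((ℛ R a).right i) * (ℛ R a).left i) w) := by
      simp only [hq.apply_action_tmul, map_sum, map_mul, LinearMap.sum_apply,
        TensorProduct.tmul_sum, Module.End.mul_apply]
    _ = counit (R := R) a • q (v ⊗ₜ w) := by
      rw [sum_antipode_right_mul_left hS, AlgHom.commutes, Module.algebraMap_end_apply,
        TensorProduct.tmul_smul, map_smul]

/-- The projection `a ⊗ v ↦ S(a) · v` of `A ⊗ V` onto its coinvariants, identified with `V`. -/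
noncomputable def coinvProj (ρ : A →ₐ[R] Module.End R V) : A ⊗[R] V →ₗ[R] V :=
  TensorProduct.lift (ρ.toLinearMap ∘ₗ antipode R)

@[simp]
lemma coinvProj_tmul (ρ : A →ₐ[R] Module.End R V) (a : A) (v : V) :
    coinvProj ρ (a ⊗ₜ v) = ρ (antipode R a) v := rfl

lemma coinvProj_surjective (ρ : A →ₐ[R] Module.End R V) : Function.Surjective (coinvProj ρ) :=
  fun v ↦ ⟨1 ⊗ₜ v, by rw [coinvProj_tmul, antipode_one, map_one, Module.End.one_apply]⟩

lemma isActionInvariant_coinvProj (ρ : A →ₐ[R] Module.End R V) :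
    IsActionInvariant (tensorAction (Algebra.lmul R A) ρ) (coinvProj ρ) := by
  refine fun a ↦ TensorProduct.ext' fun b v ↦ ?_
  calc coinvProj ρ (tensorAction (Algebra.lmul R A) ρ a (b ⊗ₜ v))
    _ = ρ (antipode R b *
          ∑ i ∈ (ℛ R a).index, antipode R ((ℛ R a).left i) * (ℛ R a).right i) v := by
      simp [tensorAction_tmul_eq_sum _ _ (ℛ R a), antipode_mul_antidistrib, LinearMap.sum_apply]
    _ = counit (R := R) a • coinvProj ρ (b ⊗ₜ v) := by
      rw [sum_antipode_mul_eq_smul, mul_smul_one, map_smul, LinearMap.smul_apply, coinvProj_tmul]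

lemma IsActionInvariant.apply_one_tmul_coinvProj {ρ : A →ₐ[R] Module.End R V} {q : A ⊗[R] V →ₗ[R] Z}
    (hq : IsActionInvariant (tensorAction (Algebra.lmul R A) ρ) q) (x : A ⊗[R] V) :
    q (1 ⊗ₜ coinvProj ρ x) = q x := by
  suffices q ∘ₗ TensorProduct.mk R A V 1 ∘ₗ coinvProj ρ = q from LinearMap.congr_fun this x
  refine TensorProduct.ext' fun a v ↦ (hq.apply_action_tmul a 1 v).symm.trans ?_
  rw [Algebra.coe_lmul_eq_mul, LinearMap.mul_apply_apply, mul_one]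

end Actions

namespace TPowM

/-- The diagonal action of `H` on `H^{⊗n}`. -/
noncomputable def action : ∀ n : ℕ, H →ₐ[k] Module.End k (TPowM k H n)
  | 0 => counitAction k H k
  | n + 1 => tensorAction (Algebra.lmul k H) (action n)

/-- Appending a last tensor factor: `x ⊗ a`, seen in `H^{⊗(n+1)}`. -/
noncomputable def snoc : ∀ n : ℕ, TPowM k H n ⊗[k] H →ₗ[k] TPowM k H (n + 1)
  | 0 => ((TensorProduct.comm k k H).toLinearMap : k ⊗[k] H →ₗ[k] H ⊗[k] k)
  | n + 1 => ((snoc n).lTensor H ∘ₗ (TensorProduct.assoc k H (TPowM k H n) H).toLinearMap :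
      (H ⊗[k] TPowM k H n) ⊗[k] H →ₗ[k] H ⊗[k] TPowM k H (n + 1))

/-- The cyclic rotation of `H^{⊗(n+1)}`, moving the first tensor factor to the end. -/
noncomputable def rotate (n : ℕ) : Module.End k (TPowM k H (n + 1)) :=
  (snoc k H n ∘ₗ (TensorProduct.comm k H (TPowM k H n)).toLinearMap :
    H ⊗[k] TPowM k H n →ₗ[k] TPowM k H (n + 1))

/-- The pure tensor `f 0 ⊗ ⋯ ⊗ f (n - 1)`. -/
noncomputable def tprod : ∀ n : ℕ, (Fin n → H) → TPowM k H n
  | 0, _ => (1 : k)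
  | n + 1, f => (f 0 ⊗ₜ tprod n (Fin.tail f) : H ⊗[k] TPowM k H n)

lemma snoc_tprod (n : ℕ) (f : Fin n → H) (a : H) :
    snoc k H n (tprod k H n f ⊗ₜ a) = tprod k H (n + 1) (Fin.snoc f a : Fin (n + 1) → H) := by
  induction n with
  | zero => rfl
  | succ n ih =>
    rw [← Fin.cons_self_tail f, ← Fin.cons_snoc_eq_snoc_cons]
    exact congrArg (f 0 ⊗ₜ[k] ·) (ih (Fin.tail f))

lemma rotate_tprod (n : ℕ) (f : Fin (n + 1) → H) :
    rotate k H n (tprod k H (n + 1) f) = tprod k H (n + 1) fun i ↦ f (i + 1) := by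
  refine (snoc_tprod k H n (Fin.tail f) (f 0)).trans (congrArg _ ?_)
  simp only [Fin.snoc_eq_cons_rotate, Fin.cons_self_tail, finRotate_apply]

lemma rotate_pow_tprod (n m : ℕ) (f : Fin (n + 1) → H) :
    (rotate k H n ^ m) (tprod k H (n + 1) f) = tprod k H (n + 1) fun i ↦ f (i + m • 1) := by
  induction m with
  | zero => simp
  | succ m ih =>
    rw [pow_succ', Module.End.mul_apply, ih, rotate_tprod]
    simp only [succ_nsmul', add_assoc]

variable {k H} in
lemma linearMap_ext {M : Type*} [AddCommMonoid M] [Module k M] {n : ℕ}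
    {φ ψ : TPowM k H n →ₗ[k] M} (h : ∀ f, φ (tprod k H n f) = ψ (tprod k H n f)) : φ = ψ := by
  induction n with
  | zero => exact LinearMap.ext_ring (R := k) (h Fin.elim0)
  | succ n ih =>
    refine TensorProduct.ext (LinearMap.ext fun a ↦ ih fun f ↦ ?_)
    exact h (Fin.cons a f)

lemma rotate_pow_succ_self (n : ℕ) : rotate k H n ^ (n + 1) = 1 :=
  linearMap_ext fun f ↦ by
    have order : (n + 1) • (1 : Fin (n + 1)) = 0 := by
      simpa only [Fintype.card_fin] using card_nsmul_eq_zero (x := (1 : Fin (n + 1)))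
    simp only [rotate_pow_tprod, order, add_zero, Module.End.one_apply]

lemma mulPow_comulPow_tmul (n : ℕ) (h : H) (x : TPowM k H n) :
    mulPow k H n (comulPow k H n h ⊗ₜ x) = action k H n h x := by
  induction n generalizing h with
  | zero => rfl
  | succ n ih =>
    suffices mulPow k H (n + 1) ∘ₗ TensorProduct.mk k _ _ (comulPow k H (n + 1) h) =
        action k H (n + 1) h from LinearMap.congr_fun this x
    refine TensorProduct.ext' fun a y ↦ ?_
    have factorwise :
        mulPow k H (n + 1) ∘ₗ (TensorProduct.mk k _ _).flip (a ⊗ₜ y) ∘ₗ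
            TensorProduct.map LinearMap.id (comulPow k H n) =
          TensorProduct.map ((Algebra.lmul k H).toLinearMap.flip a)
            ((action k H n).toLinearMap.flip y) :=
      TensorProduct.ext' fun b c ↦ congrArg ((b * a) ⊗ₜ[k] ·) (ih c y)
    exact (LinearMap.congr_fun factorwise (comul h)).trans (tensorAction_tmul _ _ h a y).symm

lemma snoc_tmul_one (n : ℕ) (x : TPowM k H n) : snoc k H n (x ⊗ₜ 1) = appEnd k H n x := by
  suffices snoc k H n ∘ₗ (TensorProduct.mk k (TPowM k H n) H).flip 1 = appEnd k H n from
    LinearMap.congr_fun this x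
  clear x
  induction n with
  | zero => rfl
  | succ n ih =>
    exact TensorProduct.ext' fun a y ↦ congrArg (a ⊗ₜ[k] ·) (LinearMap.congr_fun ih y)

lemma isEquivariant_snoc (n : ℕ) :
    IsEquivariant (tensorAction (action k H n) (Algebra.lmul k H)) (action k H (n + 1))
      (snoc k H n) := by
  induction n with
  | zero => exact isEquivariant_comm_counitAction _
  | succ n ih => exact (ih.lTensor (Algebra.lmul k H)).comp (isEquivariant_assoc _ _ _)

/-- The projection of `H^{⊗(n+1)}` onto its coinvariants, identified with `H^{⊗n}`. -/
noncomputable def proj (n : ℕ) : TPowM k H (n + 1) →ₗ[k] TPowM k H n :=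
  coinvProj (action k H n)

lemma proj_surjective (n : ℕ) : Function.Surjective (proj k H n) :=
  coinvProj_surjective (action k H n)

lemma cmTau_eq_proj_comp_appEnd (n : ℕ) :
    cmTau k H n = proj k H (n + 1) ∘ₗ appEnd k H (n + 1) :=
  TensorProduct.ext' fun a x ↦
    mulPow_comulPow_tmul k H (n + 1) (antipode k a) (appEnd k H n x)

lemma isActionInvariant_proj_comp_rotate
    (hS : antipode k ∘ₗ antipode k = (LinearMap.id : H →ₗ[k] H)) (n : ℕ) :
    IsActionInvariant (action k H (n + 1)) (proj k H n ∘ₗ rotate k H n) :=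
  ((isActionInvariant_coinvProj (action k H n)).comp (isEquivariant_snoc k H n)).comp_comm hS

lemma cmTau_comp_proj (hS : antipode k ∘ₗ antipode k = (LinearMap.id : H →ₗ[k] H)) (n : ℕ) :
    cmTau k H n ∘ₗ proj k H (n + 1) = proj k H (n + 1) ∘ₗ rotate k H (n + 1) := by
  refine LinearMap.ext fun x ↦ ?_
  rw [cmTau_eq_proj_comp_appEnd]
  simp only [LinearMap.comp_apply, ← snoc_tmul_one]
  exact (isActionInvariant_proj_comp_rotate k H hS (n + 1)).apply_one_tmul_coinvProj x

end TPowM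

theorem cmTau_pow_eq_id
    (hS : (HopfAlgebra.antipode (R := k) (A := H)) ∘ₗ (HopfAlgebra.antipode (R := k)) =
      LinearMap.id) :
    ∀ n : ℕ, ((cmTau k H n) ^ (n + 2) : Module.End k (TPowM k H (n + 1))) = 1 := by
  intro n
  refine (LinearMap.cancel_right (TPowM.proj_surjective k H (n + 1))).1 ?_
  rw [Module.End.commute_pow_left_of_commute (TPowM.cmTau_comp_proj k H hS n),
    TPowM.rotate_pow_succ_self, Module.End.one_eq_id, Module.End.one_eq_id, LinearMap.comp_id,
    LinearMap.id_comp]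
end

section
/- Let U be a left Hopf algebroid over A and M a right U-module, N and P left U-modules, with the right U-action on N ⊗_A M given by (n ⊗ m)u := u_- n ⊗ m u_+. Then in the tensor product (N ⊗_A P) ⊗_{U^op} M one has (un ⊗_A p) ⊗_{U^op} m = (n ⊗_A u_- p) ⊗_{U^op} m u_+ for all u ∈ U, n ∈ N, p ∈ P, m ∈ M. Consequently, the map (u ⊗_A n) ⊗_{U^op} m ↦ u_- n ⊗_A m u_+ is a k-module isomorphism (U ⊗_A N) ⊗_{U^op} M ≅ N ⊗_A M, with inverse n ⊗ m ↦ (1 ⊗ n) ⊗ m. -/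
/-!
Left bialgebroids and left Hopf algebroids (Schauenburg's `×_A`-Hopf algebras).

Let `k` be a commutative ring, `A` a `k`-algebra, and `U` a `k`-algebra.  A left bialgebroid
structure on `U` over `A` consists of a source map `s : A → U` (a ring homomorphism) and a
target map `t : A → U` (a ring anti-homomorphism) with commuting images, together with an
`A`-coring structure `(Δ, ε)` on `U` for the `(A,A)`-bimodule structure
`a ▷ u ◁ b := s(a)t(b)u`, such that `Δ` lands in the Takeuchi product and is multiplicative,
and `ε` satisfies `ε(u s(ε v)) = ε(uv) = ε(u t(ε v))`.

The relevant tensor products over the (noncommutative) base `A` are realised as quotients of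
the tensor product over `k`:
* `T2 = U ⊗_A U` is `U ⊗[k] U` modulo `t(a)u ⊗ v - u ⊗ s(a)v`;
* `T3 = U ⊗_A U ⊗_A U` is `U ⊗[k] U ⊗[k] U` modulo the analogous relations in both places;
* `TOp = U ⊗_{Aᵒᵖ} U` is `U ⊗[k] U` modulo `u t(a) ⊗ v - u ⊗ t(a)v`.

Auxiliary structure maps on these quotients (which exist uniquely, being induced by
well-defined maps on `U ⊗[k] U`) are bundled as data together with the equations
characterising them on generators.

A left Hopf algebroid is a left bialgebroid whose Hopf–Galois map
`β : U ⊗_{Aᵒᵖ} U → U ⊗_A U`, `u ⊗ v ↦ u_{(1)} ⊗ u_{(2)}v`, is bijective; the translation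
map is `u_+ ⊗_{Aᵒᵖ} u_- := β⁻¹(u ⊗_A 1)`.
-/

open TensorProduct

section Bgd

variable (k A U : Type*) [CommRing k] [Ring A] [Ring U] [Algebra k A] [Algebra k U]

/-- The defining relations of `U ⊗_A U` (as a quotient of `U ⊗[k] U`):
`(u ◁ a) ⊗ v = u ⊗ (a ▷ v)`, i.e. `t(a)u ⊗ v = u ⊗ s(a)v`. -/
def bgdRel (s t : A →ₗ[k] U) : Submodule k (U ⊗[k] U) :=
  Submodule.span k
    {x | ∃ (a : A) (u v : U), x = (t a * u) ⊗ₜ[k] v - u ⊗ₜ[k] (s a * v)}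

/-- `U ⊗_A U`. -/
abbrev T2 (s t : A →ₗ[k] U) := (U ⊗[k] U) ⧸ bgdRel k A U s t

/-- The canonical projection `U ⊗[k] U → U ⊗_A U`. -/
def π2 (s t : A →ₗ[k] U) : U ⊗[k] U →ₗ[k] T2 k A U s t := (bgdRel k A U s t).mkQ

/-- The defining relations of `U ⊗_A U ⊗_A U` (as a quotient of `U ⊗[k] (U ⊗[k] U)`). -/
def bgdRel3 (s t : A →ₗ[k] U) : Submodule k (U ⊗[k] (U ⊗[k] U)) :=
  Submodule.span k
    ({x | ∃ (a : A) (u v w : U),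
        x = (t a * u) ⊗ₜ[k] (v ⊗ₜ[k] w) - u ⊗ₜ[k] ((s a * v) ⊗ₜ[k] w)} ∪
     {x | ∃ (a : A) (u v w : U),
        x = u ⊗ₜ[k] ((t a * v) ⊗ₜ[k] w) - u ⊗ₜ[k] (v ⊗ₜ[k] (s a * w))})

/-- `U ⊗_A U ⊗_A U`. -/
abbrev T3 (s t : A →ₗ[k] U) := (U ⊗[k] (U ⊗[k] U)) ⧸ bgdRel3 k A U s t

/-- The canonical projection onto `U ⊗_A U ⊗_A U`. -/
def π3 (s t : A →ₗ[k] U) : U ⊗[k] (U ⊗[k] U) →ₗ[k] T3 k A U s t := (bgdRel3 k A U s t).mkQ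

/-- The defining relations of `U ⊗_{Aᵒᵖ} U` (as a quotient of `U ⊗[k] U`):
`(a ▸ u) ⊗ v = u ⊗ (v ◁ a)`, i.e. `u t(a) ⊗ v = u ⊗ t(a)v`. -/
def opRel (t : A →ₗ[k] U) : Submodule k (U ⊗[k] U) :=
  Submodule.span k
    {x | ∃ (a : A) (u v : U), x = (u * t a) ⊗ₜ[k] v - u ⊗ₜ[k] (t a * v)}

/-- `U ⊗_{Aᵒᵖ} U`. -/
abbrev TOp (t : A →ₗ[k] U) := (U ⊗[k] U) ⧸ opRel k A U t

/-- The canonical projection `U ⊗[k] U → U ⊗_{Aᵒᵖ} U`. -/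
def πOp (t : A →ₗ[k] U) : U ⊗[k] U →ₗ[k] TOp k A U t := (opRel k A U t).mkQ

variable (s t : A →ₗ[k] U)

/-- A left bialgebroid structure on the `k`-algebra `U` over the base `k`-algebra `A`,
with source map `s` and target map `t`. -/
structure LeftBialgebroid : Type _ where
  s_one : s 1 = 1
  s_mul : ∀ a b : A, s (a * b) = s a * s b
  t_one : t 1 = 1
  t_mul : ∀ a b : A, t (a * b) = t b * t a
  st_comm : ∀ a b : A, s a * t b = t b * s a
  /-- the coproduct -/
  Δ : U →ₗ[k] T2 k A U s t
  /-- the counit -/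
  ε : U →ₗ[k] A
  Δ_one : Δ 1 = π2 k A U s t (1 ⊗ₜ[k] 1)
  ε_one : ε 1 = 1
  /-- `(ε ⊗ id)`-contraction `u ⊗_A v ↦ s(ε u)v` -/
  cuL : T2 k A U s t →ₗ[k] U
  cuL_eq : ∀ x y : U, cuL (π2 k A U s t (x ⊗ₜ[k] y)) = s (ε x) * y
  /-- `(id ⊗ ε)`-contraction `u ⊗_A v ↦ t(ε v)u` -/
  cuR : T2 k A U s t →ₗ[k] U
  cuR_eq : ∀ x y : U, cuR (π2 k A U s t (x ⊗ₜ[k] y)) = t (ε y) * x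
  /-- left counitality -/
  counit_left : ∀ u : U, cuL (Δ u) = u
  /-- right counitality -/
  counit_right : ∀ u : U, cuR (Δ u) = u
  /-- the action `a ⬝ (u ⊗_A v) = u t(a) ⊗_A v` -/
  actL : A → T2 k A U s t →ₗ[k] T2 k A U s t
  actL_eq : ∀ (a : A) (x y : U),
    actL a (π2 k A U s t (x ⊗ₜ[k] y)) = π2 k A U s t ((x * t a) ⊗ₜ[k] y)
  /-- the action `(u ⊗_A v) ⬝ a = u ⊗_A v s(a)` -/
  actR : A → T2 k A U s t →ₗ[k] T2 k A U s t
  actR_eq : ∀ (a : A) (x y : U),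
    actR a (π2 k A U s t (x ⊗ₜ[k] y)) = π2 k A U s t (x ⊗ₜ[k] (y * s a))
  /-- the coproduct takes values in the Takeuchi product `U ×_A U` -/
  takeuchi : ∀ (a : A) (u : U), actL a (Δ u) = actR a (Δ u)
  /-- `Δ ⊗_A id` -/
  ΔL : T2 k A U s t →ₗ[k] T3 k A U s t
  ΔL_eq : ∀ (x y : U) (w : U ⊗[k] U), π2 k A U s t w = Δ x →
    ΔL (π2 k A U s t (x ⊗ₜ[k] y)) =
      ((π3 k A U s t) ∘ₗ
        (LinearMap.lTensor U ((TensorProduct.mk k U U).flip y))) w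
  /-- `id ⊗_A Δ` -/
  ΔR : T2 k A U s t →ₗ[k] T3 k A U s t
  ΔR_eq : ∀ (x y : U) (w : U ⊗[k] U), π2 k A U s t w = Δ y →
    ΔR (π2 k A U s t (x ⊗ₜ[k] y)) =
      ((π3 k A U s t) ∘ₗ (TensorProduct.mk k U (U ⊗[k] U) x)) w
  /-- coassociativity -/
  coassoc : ∀ u : U, ΔL (Δ u) = ΔR (Δ u)
  /-- right multiplication in both tensor legs: `(p ⊗_A q) ⬝ (x ⊗ y) = px ⊗_A qy` -/
  mulT : U ⊗[k] U →ₗ[k] T2 k A U s t →ₗ[k] T2 k A U s t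
  mulT_eq : ∀ x y p q : U,
    mulT (x ⊗ₜ[k] y) (π2 k A U s t (p ⊗ₜ[k] q)) = π2 k A U s t ((p * x) ⊗ₜ[k] (q * y))
  /-- multiplicativity of the coproduct -/
  Δ_mul : ∀ (u v : U) (w : U ⊗[k] U), π2 k A U s t w = Δ v → Δ (u * v) = mulT w (Δ u)
  /-- the counit identities `ε(u s(ε v)) = ε(uv) = ε(u t(ε v))` -/
  ε_s : ∀ u v : U, ε (u * s (ε v)) = ε (u * v)
  ε_t : ∀ u v : U, ε (u * t (ε v)) = ε (u * v)

/-- A left Hopf algebroid structure (`×_A`-Hopf algebra) on a left bialgebroid `B`: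
the Hopf–Galois map `β : U ⊗_{Aᵒᵖ} U → U ⊗_A U`, `u ⊗ v ↦ u_{(1)} ⊗ u_{(2)}v`, together
with a (two-sided) inverse. -/
structure LeftHopfAlgebroid (B : LeftBialgebroid k A U s t) where
  /-- right multiplication on the second leg of `U ⊗_A U` -/
  mulSnd : U → T2 k A U s t →ₗ[k] T2 k A U s t
  mulSnd_eq : ∀ v x y : U,
    mulSnd v (π2 k A U s t (x ⊗ₜ[k] y)) = π2 k A U s t (x ⊗ₜ[k] (y * v))
  /-- the Hopf–Galois map -/
  β : TOp k A U t →ₗ[k] T2 k A U s t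
  β_eq : ∀ u v : U, β (πOp k A U t (u ⊗ₜ[k] v)) = mulSnd v (B.Δ u)
  /-- the inverse of the Hopf–Galois map -/
  βinv : T2 k A U s t →ₗ[k] TOp k A U t
  β_left_inv : βinv ∘ₗ β = LinearMap.id
  β_right_inv : β ∘ₗ βinv = LinearMap.id

end Bgd

/-!
STATEMENT 19: Let `U` be a left Hopf algebroid over `A`, `M` a right `U`-module, and
`N`, `P` left `U`-modules.  Left modules are viewed as `(A,A)`-bimodules via
`a ▷ n ◁ b = s(a)t(b)n`, right modules via `a ▸ m ◂ b = m s(b) t(a)`; `N ⊗_A P`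
carries the diagonal left `U`-action `u(n ⊗ p) = u_{(1)}n ⊗ u_{(2)}p`, and `⊗_{Uᵒᵖ}`
coequalises this action against the right action on `M`.  Then
`(un ⊗_A p) ⊗_{Uᵒᵖ} m = (n ⊗_A u_- p) ⊗_{Uᵒᵖ} m u_+`, and the map
`(u ⊗_A n) ⊗_{Uᵒᵖ} m ↦ u_- n ⊗_A m u_+` is a `k`-module isomorphism
`(U ⊗_A N) ⊗_{Uᵒᵖ} M ≅ N ⊗_A M` with inverse `n ⊗ m ↦ (1 ⊗ n) ⊗ m`.

Translation-map elements `u_+ ⊗_{Aᵒᵖ} u_-` and coproducts `Δ(u)` are handled via arbitrary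
finite families of representatives.
-/

section Stmt19

open MulOpposite

variable (k A U : Type*) [CommRing k] [Ring A] [Ring U] [Algebra k A] [Algebra k U]
variable (s t : A →ₗ[k] U)
variable (N P M : Type*)
  [AddCommGroup N] [Module k N] [Module U N] [IsScalarTower k U N]
  [AddCommGroup P] [Module k P] [Module U P] [IsScalarTower k U P]
  [AddCommGroup M] [Module k M] [Module Uᵐᵒᵖ M] [IsScalarTower k Uᵐᵒᵖ M]

/-- The relations of `N ⊗_A P` for left `U`-modules `N`, `P` (bimodule structures
`a ▷ n ◁ b = s(a)t(b)n`): `(n ◁ a) ⊗ p = n ⊗ (a ▷ p)`. -/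
def modRel : Submodule k (N ⊗[k] P) :=
  Submodule.span k
    {x | ∃ (a : A) (n : N) (p : P), x = ((t a • n) ⊗ₜ[k] p) - (n ⊗ₜ[k] (s a • p))}

/-- `N ⊗_A P`. -/
abbrev TMod := (N ⊗[k] P) ⧸ modRel k A U s t N P

/-- The canonical projection onto `N ⊗_A P`. -/
def πMod : N ⊗[k] P →ₗ[k] TMod k A U s t N P := (modRel k A U s t N P).mkQ

/-- The relations of `X ⊗_{Uᵒᵖ} M` for a `k`-module `X` with a (diagonal) left `U`-action
`act` and a right `U`-module `M`: `(u ⬝ x) ⊗ m = x ⊗ (m u)`. -/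
def copRel (X : Type*) [AddCommGroup X] [Module k X]
    (act : U →ₗ[k] X →ₗ[k] X) : Submodule k (X ⊗[k] M) :=
  Submodule.span k
    {z | ∃ (u : U) (x : X) (m : M), z = (act u x) ⊗ₜ[k] m - x ⊗ₜ[k] ((op u) • m)}

/-- The relations of `N ⊗_A M` for a left `U`-module `N` and right `U`-module `M`
(`n ◁ a = t(a)n`, `a ▸ m = m t(a)`): `(n ◁ a) ⊗ m = n ⊗ (a ▸ m)`. -/
def modRelNM : Submodule k (N ⊗[k] M) :=
  Submodule.span k
    {z | ∃ (a : A) (n : N) (m : M),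
      z = ((t a • n) ⊗ₜ[k] m) - (n ⊗ₜ[k] ((MulOpposite.op (t a)) • m))}

/-!
The translation map satisfies `u_{+(1)} ⊗ u_{+(2)}u_- = u ⊗ 1`, so in `N ⊗_A P` one has
`un ⊗ p = ∑ u_+ · (n ⊗ u_- p)` for the diagonal action; moving `u_+` across `⊗_{Uᵒᵖ}` gives the
balancing identity. Taking `n = 1` in `N = U` shows moreover that `U ⊗_A N` is spanned by the
elements `u · (1 ⊗ n)`. On these, `u ⊗ n ↦ (m ↦ u_- n ⊗ m u_+)` takes the simple form
`u · (1 ⊗ n) ↦ (m ↦ n ⊗ mu)`, because `β⁻¹(Δ(u)) = u ⊗ 1`; from this formula it is clear that the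
map is balanced over `Uᵒᵖ` and inverse to `n ⊗ m ↦ (1 ⊗ n) ⊗ m`.
-/

section Quotients

variable {k A U s t N P M}

lemma mkQ_span_eq_of_sub_mem {V : Type*} [AddCommGroup V] [Module k V] {S : Set V} {x y : V}
    (h : x - y ∈ S) : (Submodule.span k S).mkQ x = (Submodule.span k S).mkQ y :=
  (Submodule.Quotient.eq _).2 (Submodule.subset_span h)

lemma mkQ_tmul_induction {V W : Type*} [AddCommGroup V] [Module k V] [AddCommGroup W]
    [Module k W] {R : Submodule k (V ⊗[k] W)} {motive : (V ⊗[k] W) ⧸ R → Prop}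
    (tmul : ∀ v w, motive (R.mkQ (v ⊗ₜ[k] w)))
    (add : ∀ x y, motive x → motive y → motive (x + y)) (z : (V ⊗[k] W) ⧸ R) : motive z := by
  obtain ⟨z, rfl⟩ := R.mkQ_surjective z
  induction z with
  | zero => simpa using tmul 0 0
  | tmul v w => exact tmul v w
  | add x y hx hy => simpa using add _ _ hx hy

lemma π2_surjective : Function.Surjective (π2 k A U s t) := Submodule.mkQ_surjective _

lemma πOp_surjective : Function.Surjective (πOp k A U t) := Submodule.mkQ_surjective _

lemma T2_induction {motive : T2 k A U s t → Prop}
    (tmul : ∀ u v : U, motive (π2 k A U s t (u ⊗ₜ[k] v)))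
    (add : ∀ x y, motive x → motive y → motive (x + y)) (z : T2 k A U s t) : motive z :=
  mkQ_tmul_induction tmul add z

lemma TOp_induction {motive : TOp k A U t → Prop}
    (tmul : ∀ u v : U, motive (πOp k A U t (u ⊗ₜ[k] v)))
    (add : ∀ x y, motive x → motive y → motive (x + y)) (z : TOp k A U t) : motive z :=
  mkQ_tmul_induction tmul add z

omit [IsScalarTower k U N] [IsScalarTower k U P] in
lemma TMod_hom_ext {X : Type*} [AddCommGroup X] [Module k X]
    {f g : TMod k A U s t N P →ₗ[k] X}
    (h : ∀ n p, f (πMod k A U s t N P (n ⊗ₜ[k] p)) = g (πMod k A U s t N P (n ⊗ₜ[k] p))) :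
    f = g :=
  Submodule.linearMap_qext _ (TensorProduct.ext' h)

lemma π2_smul_tmul (a : A) (u v : U) :
    π2 k A U s t ((t a * u) ⊗ₜ[k] v) = π2 k A U s t (u ⊗ₜ[k] (s a * v)) :=
  mkQ_span_eq_of_sub_mem ⟨a, u, v, rfl⟩

lemma πOp_mul_tmul (a : A) (u v : U) :
    πOp k A U t ((u * t a) ⊗ₜ[k] v) = πOp k A U t (u ⊗ₜ[k] (t a * v)) :=
  mkQ_span_eq_of_sub_mem ⟨a, u, v, rfl⟩

omit [IsScalarTower k U N] [IsScalarTower k U P] in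
lemma πMod_smul_tmul (a : A) (n : N) (p : P) :
    πMod k A U s t N P ((t a • n) ⊗ₜ[k] p) = πMod k A U s t N P (n ⊗ₜ[k] (s a • p)) :=
  mkQ_span_eq_of_sub_mem ⟨a, n, p, rfl⟩

omit [IsScalarTower k U N] [IsScalarTower k Uᵐᵒᵖ M] in
lemma mkQ_modRelNM_smul_tmul (a : A) (n : N) (m : M) :
    (modRelNM k A U t N M).mkQ ((t a • n) ⊗ₜ[k] m) =
      (modRelNM k A U t N M).mkQ (n ⊗ₜ[k] (op (t a) • m)) :=
  mkQ_span_eq_of_sub_mem ⟨a, n, m, rfl⟩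

omit [IsScalarTower k Uᵐᵒᵖ M] in
lemma mkQ_copRel_act_tmul {X : Type*} [AddCommGroup X] [Module k X]
    (act : U →ₗ[k] X →ₗ[k] X) (u : U) (x : X) (m : M) :
    (copRel k U M X act).mkQ (act u x ⊗ₜ[k] m) =
      (copRel k U M X act).mkQ (x ⊗ₜ[k] (op u • m)) :=
  mkQ_span_eq_of_sub_mem ⟨u, x, m, rfl⟩

variable (N P) in
/-- The action `(u ⊗_A v)(n ⊗ p) = un ⊗_A vp` of `U ⊗_A U` on `N ⊗ P`, valued in
`N ⊗_A P`. -/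
noncomputable def tensorAct : T2 k A U s t →ₗ[k] N ⊗[k] P →ₗ[k] TMod k A U s t N P :=
  (bgdRel k A U s t).liftQ
    ((πMod k A U s t N P).compRight k ∘ₗ TensorProduct.homTensorHomMap (.id k) N P N P ∘ₗ
      TensorProduct.map (Algebra.lsmul k k N).toLinearMap (Algebra.lsmul k k P).toLinearMap)
    (Submodule.span_le.2 <| by
      rintro _ ⟨a, u, v, rfl⟩
      refine LinearMap.sub_mem_ker_iff.2 (TensorProduct.ext' fun n p => ?_)
      simpa [mul_smul] using πMod_smul_tmul a (u • n) (v • p))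

lemma tensorAct_tmul (u v : U) (n : N) (p : P) :
    tensorAct N P (π2 k A U s t (u ⊗ₜ[k] v)) (n ⊗ₜ[k] p) =
      πMod k A U s t N P ((u • n) ⊗ₜ[k] (v • p)) := rfl

variable (N M) in
/-- The action `(u ⊗_{Aᵒᵖ} v)(n ⊗ m) = vn ⊗_A mu` of `U ⊗_{Aᵒᵖ} U` on `N ⊗ M`, valued in
`N ⊗_A M`. Applied to `u_+ ⊗ u_-` it is the diagonal right action of `u`. -/
noncomputable def opTensorAct :
    TOp k A U t →ₗ[k] N ⊗[k] M →ₗ[k] (N ⊗[k] M) ⧸ modRelNM k A U t N M :=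
  (opRel k A U t).liftQ
    ((modRelNM k A U t N M).mkQ.compRight k ∘ₗ TensorProduct.homTensorHomMap (.id k) N M N M ∘ₗ
      TensorProduct.map (Algebra.lsmul k k N).toLinearMap
        ((Algebra.lsmul k k M).toLinearMap ∘ₗ (opLinearEquiv k).toLinearMap) ∘ₗ
      (TensorProduct.comm k U U).toLinearMap)
    (Submodule.span_le.2 <| by
      rintro _ ⟨a, u, v, rfl⟩
      refine LinearMap.sub_mem_ker_iff.2 (TensorProduct.ext' fun n m => ?_)
      simpa [mul_smul] using (mkQ_modRelNM_smul_tmul a (v • n) (op u • m)).symm)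

lemma opTensorAct_tmul (u v : U) (n : N) (m : M) :
    opTensorAct N M (πOp k A U t (u ⊗ₜ[k] v)) (n ⊗ₜ[k] m) =
      (modRelNM k A U t N M).mkQ ((v • n) ⊗ₜ[k] (op u • m)) := rfl

end Quotients

namespace LeftBialgebroid

variable {k A U s t} (B : LeftBialgebroid k A U s t) {N P}

lemma tensorAct_actL (a : A) (z : T2 k A U s t) (n : N) (p : P) :
    tensorAct N P (B.actL a z) (n ⊗ₜ[k] p) = tensorAct N P z ((t a • n) ⊗ₜ[k] p) := by
  induction z using T2_induction with
  | tmul u v => rw [B.actL_eq, tensorAct_tmul, tensorAct_tmul, mul_smul]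
  | add x y hx hy => simp only [map_add, LinearMap.add_apply, hx, hy]

lemma tensorAct_actR (a : A) (z : T2 k A U s t) (n : N) (p : P) :
    tensorAct N P (B.actR a z) (n ⊗ₜ[k] p) = tensorAct N P z (n ⊗ₜ[k] (s a • p)) := by
  induction z using T2_induction with
  | tmul u v => rw [B.actR_eq, tensorAct_tmul, tensorAct_tmul, mul_smul]
  | add x y hx hy => simp only [map_add, LinearMap.add_apply, hx, hy]

lemma tensorAct_mulT_tmul (u v : U) (z : T2 k A U s t) (n : N) (p : P) :
    tensorAct N P (B.mulT (u ⊗ₜ[k] v) z) (n ⊗ₜ[k] p) =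
      tensorAct N P z ((u • n) ⊗ₜ[k] (v • p)) := by
  induction z using T2_induction with
  | tmul x y => rw [B.mulT_eq, tensorAct_tmul, tensorAct_tmul, mul_smul, mul_smul]
  | add x y hx hy => simp only [map_add, LinearMap.add_apply, hx, hy]

variable (N P) in
/-- The diagonal action `u · (n ⊗_A p) = u_{(1)} n ⊗_A u_{(2)} p` of `U` on `N ⊗_A P`. -/
noncomputable def diagAct : U →ₗ[k] TMod k A U s t N P →ₗ[k] TMod k A U s t N P :=
  ((modRel k A U s t N P).liftQ (tensorAct N P ∘ₗ B.Δ).flip (Submodule.span_le.2 <| by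
    rintro _ ⟨a, n, p, rfl⟩
    refine LinearMap.sub_mem_ker_iff.2 (LinearMap.ext fun u => ?_)
    simp only [LinearMap.flip_apply, LinearMap.comp_apply]
    rw [← B.tensorAct_actL, B.takeuchi, B.tensorAct_actR])).flip

lemma diagAct_πMod (u : U) (x : N ⊗[k] P) :
    B.diagAct N P u (πMod k A U s t N P x) = tensorAct N P (B.Δ u) x := rfl

lemma eq_diagAct {act : U →ₗ[k] TMod k A U s t N P →ₗ[k] TMod k A U s t N P}
    (hact : ∀ (u : U) (n : N) (p : P) (ℓ : ℕ) (x y : Fin ℓ → U),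
      π2 k A U s t (∑ i, x i ⊗ₜ[k] y i) = B.Δ u →
      act u (πMod k A U s t N P (n ⊗ₜ[k] p)) =
        ∑ i, πMod k A U s t N P ((x i • n) ⊗ₜ[k] (y i • p))) :
    act = B.diagAct N P := by
  refine LinearMap.ext fun u => TMod_hom_ext fun n p => ?_
  obtain ⟨w, hw⟩ := π2_surjective (B.Δ u)
  obtain ⟨ℓ, x, y, rfl⟩ := TensorProduct.exists_sum_tmul_eq w
  simp only [hact u n p ℓ x y hw, diagAct_πMod, ← hw, map_sum, LinearMap.sum_apply,
    tensorAct_tmul]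

lemma diagAct_mul (u v : U) (x : TMod k A U s t N P) :
    B.diagAct N P (u * v) x = B.diagAct N P u (B.diagAct N P v x) := by
  suffices B.diagAct N P (u * v) = B.diagAct N P u ∘ₗ B.diagAct N P v from
    LinearMap.congr_fun this x
  refine TMod_hom_ext fun n p => ?_
  obtain ⟨w, hw⟩ := π2_surjective (B.Δ v)
  rw [LinearMap.comp_apply, diagAct_πMod, diagAct_πMod, B.Δ_mul u v w hw, ← hw]
  clear hw
  induction w with
  | zero => simp only [map_zero, LinearMap.zero_apply]
  | tmul a b => rw [B.tensorAct_mulT_tmul, tensorAct_tmul, diagAct_πMod]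
  | add w w' h h' => simp only [map_add, LinearMap.add_apply, h, h']

end LeftBialgebroid

namespace LeftHopfAlgebroid

variable {k A U s t} {B : LeftBialgebroid k A U s t} (H : LeftHopfAlgebroid k A U s t B) {N P M}

lemma βinv_β (z : TOp k A U t) : H.βinv (H.β z) = z := LinearMap.congr_fun H.β_left_inv z

lemma β_βinv (z : T2 k A U s t) : H.β (H.βinv z) = z := LinearMap.congr_fun H.β_right_inv z

lemma mulSnd_mulSnd (v w : U) (z : T2 k A U s t) :
    H.mulSnd w (H.mulSnd v z) = H.mulSnd (v * w) z := by
  induction z using T2_induction with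
  | tmul x y => rw [H.mulSnd_eq, H.mulSnd_eq, H.mulSnd_eq, mul_assoc]
  | add x y hx hy => simp only [map_add, hx, hy]

lemma mulSnd_one (z : T2 k A U s t) : H.mulSnd 1 z = z := by
  induction z using T2_induction with
  | tmul x y => rw [H.mulSnd_eq, mul_one]
  | add x y hx hy => rw [map_add, hx, hy]

lemma β_tmul_one (u : U) : H.β (πOp k A U t (u ⊗ₜ[k] 1)) = B.Δ u := by
  rw [H.β_eq, H.mulSnd_one]

lemma βinv_Δ (u : U) : H.βinv (B.Δ u) = πOp k A U t (u ⊗ₜ[k] 1) := by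
  rw [← H.β_tmul_one, H.βinv_β]

include H in
lemma Δ_t (a : A) : B.Δ (t a) = π2 k A U s t (1 ⊗ₜ[k] t a) := by
  have h := congrArg H.β (πOp_mul_tmul (k := k) (t := t) a 1 1)
  rwa [one_mul, mul_one, H.β_tmul_one, H.β_eq, B.Δ_one, H.mulSnd_eq, one_mul] at h

section Balancing

lemma tensorAct_mulSnd (v : U) (z : T2 k A U s t) (n : N) (p : P) :
    tensorAct N P (H.mulSnd v z) (n ⊗ₜ[k] p) = tensorAct N P z (n ⊗ₜ[k] (v • p)) := by
  induction z using T2_induction with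
  | tmul x y => rw [H.mulSnd_eq, tensorAct_tmul, tensorAct_tmul, mul_smul]
  | add x y hx hy => simp only [map_add, LinearMap.add_apply, hx, hy]

lemma tensorAct_β_tmul (u v : U) (n : N) (p : P) :
    tensorAct N P (H.β (πOp k A U t (u ⊗ₜ[k] v))) (n ⊗ₜ[k] p) =
      B.diagAct N P u (πMod k A U s t N P (n ⊗ₜ[k] (v • p))) := by
  rw [H.β_eq, H.tensorAct_mulSnd, B.diagAct_πMod]

lemma πMod_smul_tmul_eq_sum_diagAct {u : U} {ℓ : ℕ} {x y : Fin ℓ → U}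
    (h : πOp k A U t (∑ i, x i ⊗ₜ[k] y i) = H.βinv (π2 k A U s t (u ⊗ₜ[k] 1)))
    (n : N) (p : P) :
    πMod k A U s t N P ((u • n) ⊗ₜ[k] p) =
      ∑ i, B.diagAct N P (x i) (πMod k A U s t N P (n ⊗ₜ[k] (y i • p))) := calc
  _ = tensorAct N P (π2 k A U s t (u ⊗ₜ[k] 1)) (n ⊗ₜ[k] p) := by rw [tensorAct_tmul, one_smul]
  _ = tensorAct N P (H.β (πOp k A U t (∑ i, x i ⊗ₜ[k] y i))) (n ⊗ₜ[k] p) := by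
    rw [h, H.β_βinv]
  _ = _ := by simp only [map_sum, LinearMap.sum_apply, H.tensorAct_β_tmul]

omit [IsScalarTower k Uᵐᵒᵖ M] in
lemma mkQ_copRel_smul_tmul_eq_sum {u : U} {ℓ : ℕ} {x y : Fin ℓ → U}
    (h : πOp k A U t (∑ i, x i ⊗ₜ[k] y i) = H.βinv (π2 k A U s t (u ⊗ₜ[k] 1)))
    (n : N) (p : P) (m : M) :
    (copRel k U M (TMod k A U s t N P) (B.diagAct N P)).mkQ
        (πMod k A U s t N P ((u • n) ⊗ₜ[k] p) ⊗ₜ[k] m) =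
      ∑ i, (copRel k U M (TMod k A U s t N P) (B.diagAct N P)).mkQ
        (πMod k A U s t N P (n ⊗ₜ[k] (y i • p)) ⊗ₜ[k] (op (x i) • m)) := by
  rw [H.πMod_smul_tmul_eq_sum_diagAct h, TensorProduct.sum_tmul, map_sum]
  exact Finset.sum_congr rfl fun i _ => mkQ_copRel_act_tmul _ _ _ _

include H in
lemma hom_ext_of_diagAct_one {X : Type*} [AddCommGroup X] [Module k X]
    {f g : TMod k A U s t U N →ₗ[k] X}
    (hfg : ∀ (u : U) (n : N),
      f (B.diagAct U N u (πMod k A U s t U N (1 ⊗ₜ[k] n))) =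
        g (B.diagAct U N u (πMod k A U s t U N (1 ⊗ₜ[k] n)))) : f = g := by
  refine TMod_hom_ext fun u n => ?_
  obtain ⟨z, hz⟩ := πOp_surjective (H.βinv (π2 k A U s t (u ⊗ₜ[k] 1)))
  obtain ⟨ℓ, x, y, rfl⟩ := TensorProduct.exists_sum_tmul_eq z
  have hu := H.πMod_smul_tmul_eq_sum_diagAct hz (1 : U) n
  rw [smul_eq_mul, mul_one] at hu
  simp only [hu, map_sum, hfg]

end Balancing

section Cancellation

lemma opTensorAct_βinv_mulSnd (v : U) (z : T2 k A U s t) (n : N) (m : M) :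
    opTensorAct N M (H.βinv (H.mulSnd v z)) (n ⊗ₜ[k] m) =
      opTensorAct N M (H.βinv z) ((v • n) ⊗ₜ[k] m) := by
  obtain ⟨z, rfl⟩ : ∃ w, H.β w = z := ⟨_, H.β_βinv z⟩
  induction z using TOp_induction with
  | tmul x y =>
    rw [H.β_eq, H.mulSnd_mulSnd, ← H.β_eq, ← H.β_eq, H.βinv_β, H.βinv_β, opTensorAct_tmul,
      opTensorAct_tmul, mul_smul]
  | add x y hx hy => simp only [map_add, LinearMap.add_apply, hx, hy]

lemma opTensorAct_βinv_tmul (u v : U) (n : N) (m : M) :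
    opTensorAct N M (H.βinv (π2 k A U s t (u ⊗ₜ[k] v))) (n ⊗ₜ[k] m) =
      opTensorAct N M (H.βinv (π2 k A U s t (u ⊗ₜ[k] 1))) ((v • n) ⊗ₜ[k] m) := by
  rw [← H.opTensorAct_βinv_mulSnd, H.mulSnd_eq, one_mul]

variable (N M) in
/-- The map `u ⊗_A n ↦ (m ↦ u_- n ⊗_A m u_+)`; `cancel` is the map it induces on
`(U ⊗_A N) ⊗_{Uᵒᵖ} M`. -/
noncomputable def translate :
    TMod k A U s t U N →ₗ[k] M →ₗ[k] (N ⊗[k] M) ⧸ modRelNM k A U t N M :=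
  (modRel k A U s t U N).liftQ
    (TensorProduct.lift (TensorProduct.lcurry (.id k) N M _ ∘ₗ opTensorAct N M ∘ₗ H.βinv ∘ₗ
      π2 k A U s t ∘ₗ (TensorProduct.mk k U U).flip 1))
    (Submodule.span_le.2 <| by
      rintro _ ⟨a, u, n, rfl⟩
      refine LinearMap.sub_mem_ker_iff.2 (LinearMap.ext fun m => ?_)
      change opTensorAct N M (H.βinv (π2 k A U s t ((t a * u) ⊗ₜ[k] 1))) (n ⊗ₜ[k] m) =
        opTensorAct N M (H.βinv (π2 k A U s t (u ⊗ₜ[k] 1))) ((s a • n) ⊗ₜ[k] m)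
      rw [π2_smul_tmul, mul_one, H.opTensorAct_βinv_tmul])

lemma translate_πMod (u : U) (n : N) (m : M) :
    H.translate N M (πMod k A U s t U N (u ⊗ₜ[k] n)) m =
      opTensorAct N M (H.βinv (π2 k A U s t (u ⊗ₜ[k] 1))) (n ⊗ₜ[k] m) := rfl

lemma translate_tensorAct_one (z : T2 k A U s t) (n : N) (m : M) :
    H.translate N M (tensorAct U N z (1 ⊗ₜ[k] n)) m =
      opTensorAct N M (H.βinv z) (n ⊗ₜ[k] m) := by
  induction z using T2_induction with
  | tmul u v =>
    rw [tensorAct_tmul, smul_eq_mul, mul_one, translate_πMod, ← H.opTensorAct_βinv_tmul]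
  | add x y hx hy => simp only [map_add, LinearMap.add_apply, hx, hy]

lemma translate_diagAct_one (u : U) (n : N) (m : M) :
    H.translate N M (B.diagAct U N u (πMod k A U s t U N (1 ⊗ₜ[k] n))) m =
      (modRelNM k A U t N M).mkQ (n ⊗ₜ[k] (op u • m)) := by
  rw [B.diagAct_πMod, H.translate_tensorAct_one, H.βinv_Δ, opTensorAct_tmul, one_smul]

lemma translate_diagAct (u : U) (x : TMod k A U s t U N) (m : M) :
    H.translate N M (B.diagAct U N u x) m = H.translate N M x (op u • m) := by
  suffices (H.translate N M ∘ₗ B.diagAct U N u).flip m =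
      (H.translate N M).flip (op u • m) from LinearMap.congr_fun this x
  refine H.hom_ext_of_diagAct_one fun v n => ?_
  simp only [LinearMap.flip_apply, LinearMap.comp_apply]
  rw [← B.diagAct_mul, H.translate_diagAct_one, H.translate_diagAct_one, op_mul, mul_smul]

variable (N M)

/-- The map `(u ⊗_A n) ⊗_{Uᵒᵖ} m ↦ u_- n ⊗_A m u_+`, cancelling `U` against `⊗_{Uᵒᵖ}`. -/
noncomputable def cancel :
    (TMod k A U s t U N ⊗[k] M) ⧸ copRel k U M (TMod k A U s t U N) (B.diagAct U N) →ₗ[k]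
      (N ⊗[k] M) ⧸ modRelNM k A U t N M :=
  (copRel k U M _ _).liftQ (TensorProduct.lift (H.translate N M)) (Submodule.span_le.2 <| by
    rintro _ ⟨u, x, m, rfl⟩
    exact LinearMap.sub_mem_ker_iff.2 (H.translate_diagAct u x m))

/-- The map `n ⊗_A m ↦ (1 ⊗_A n) ⊗_{Uᵒᵖ} m`, the inverse of `cancel`. -/
noncomputable def insertOne :
    (N ⊗[k] M) ⧸ modRelNM k A U t N M →ₗ[k]
      (TMod k A U s t U N ⊗[k] M) ⧸ copRel k U M (TMod k A U s t U N) (B.diagAct U N) :=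
  (modRelNM k A U t N M).liftQ
    ((copRel k U M (TMod k A U s t U N) (B.diagAct U N)).mkQ ∘ₗ
      (πMod k A U s t U N ∘ₗ TensorProduct.mk k U N 1).rTensor M)
    (Submodule.span_le.2 <| by
      rintro _ ⟨a, n, m, rfl⟩
      refine LinearMap.sub_mem_ker_iff.2 ?_
      have h := mkQ_copRel_act_tmul (B.diagAct U N) (t a) (πMod k A U s t U N (1 ⊗ₜ[k] n)) m
      rwa [B.diagAct_πMod, H.Δ_t, tensorAct_tmul, one_smul] at h)

variable {N M}

lemma cancel_mkQ_tmul (x : TMod k A U s t U N) (m : M) :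
    H.cancel N M ((copRel k U M _ _).mkQ (x ⊗ₜ[k] m)) = H.translate N M x m := rfl

omit [IsScalarTower k Uᵐᵒᵖ M] in
lemma insertOne_mkQ_tmul (n : N) (m : M) :
    H.insertOne N M ((modRelNM k A U t N M).mkQ (n ⊗ₜ[k] m)) =
      (copRel k U M _ (B.diagAct U N)).mkQ (πMod k A U s t U N (1 ⊗ₜ[k] n) ⊗ₜ[k] m) := rfl

lemma cancel_comp_insertOne : H.cancel N M ∘ₗ H.insertOne N M = LinearMap.id := by
  refine Submodule.linearMap_qext _ (TensorProduct.ext' fun n m => ?_)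
  change H.cancel N M (H.insertOne N M ((modRelNM k A U t N M).mkQ (n ⊗ₜ[k] m))) =
    (modRelNM k A U t N M).mkQ (n ⊗ₜ[k] m)
  rw [insertOne_mkQ_tmul, cancel_mkQ_tmul, translate_πMod, ← B.Δ_one, H.βinv_Δ,
    opTensorAct_tmul, one_smul, op_one, one_smul]

lemma insertOne_comp_cancel : H.insertOne N M ∘ₗ H.cancel N M = LinearMap.id := by
  refine Submodule.linearMap_qext _ (TensorProduct.ext (H.hom_ext_of_diagAct_one fun u n => ?_))
  refine LinearMap.ext fun m => ?_
  change H.insertOne N M (H.translate N M (B.diagAct U N u (πMod k A U s t U N (1 ⊗ₜ[k] n))) m) =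
    (copRel k U M _ _).mkQ (B.diagAct U N u (πMod k A U s t U N (1 ⊗ₜ[k] n)) ⊗ₜ[k] m)
  rw [H.translate_diagAct_one, insertOne_mkQ_tmul, mkQ_copRel_act_tmul]

variable (N M) in
/-- The isomorphism `(U ⊗_A N) ⊗_{Uᵒᵖ} M ≅ N ⊗_A M` given by `cancel` and `insertOne`. -/
noncomputable def cancelEquiv :
    ((TMod k A U s t U N ⊗[k] M) ⧸ copRel k U M (TMod k A U s t U N) (B.diagAct U N)) ≃ₗ[k]
      ((N ⊗[k] M) ⧸ modRelNM k A U t N M) :=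
  LinearEquiv.ofLinearMap (H.cancel N M) (H.insertOne N M)
    H.cancel_comp_insertOne H.insertOne_comp_cancel

lemma cancelEquiv_mkQ_tmul {u : U} {ℓ : ℕ} {x y : Fin ℓ → U}
    (h : πOp k A U t (∑ i, x i ⊗ₜ[k] y i) = H.βinv (π2 k A U s t (u ⊗ₜ[k] 1)))
    (n : N) (m : M) :
    H.cancelEquiv N M ((copRel k U M _ _).mkQ (πMod k A U s t U N (u ⊗ₜ[k] n) ⊗ₜ[k] m)) =
      ∑ i, (modRelNM k A U t N M).mkQ ((y i • n) ⊗ₜ[k] (op (x i) • m)) := calc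
  _ = opTensorAct N M (H.βinv (π2 k A U s t (u ⊗ₜ[k] 1))) (n ⊗ₜ[k] m) := rfl
  _ = _ := by simp only [← h, map_sum, LinearMap.sum_apply, opTensorAct_tmul]

end Cancellation

end LeftHopfAlgebroid

theorem tensor_over_Uop_translation
    (B : LeftBialgebroid k A U s t) (H : LeftHopfAlgebroid k A U s t B)
    -- the diagonal left `U`-action on `N ⊗_A P`
    (act : U →ₗ[k] TMod k A U s t N P →ₗ[k] TMod k A U s t N P)
    (hact : ∀ (u : U) (n : N) (p : P) (ℓ : ℕ) (x y : Fin ℓ → U),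
      π2 k A U s t (∑ i, x i ⊗ₜ[k] y i) = B.Δ u →
      act u (πMod k A U s t N P (n ⊗ₜ[k] p)) =
        ∑ i, πMod k A U s t N P ((x i • n) ⊗ₜ[k] (y i • p)))
    -- the diagonal left `U`-action on `U ⊗_A N` (`U` a left module over itself)
    (actU : U →ₗ[k] TMod k A U s t U N →ₗ[k] TMod k A U s t U N)
    (hactU : ∀ (u v : U) (n : N) (ℓ : ℕ) (x y : Fin ℓ → U),
      π2 k A U s t (∑ i, x i ⊗ₜ[k] y i) = B.Δ u →
      actU u (πMod k A U s t U N (v ⊗ₜ[k] n)) =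
        ∑ i, πMod k A U s t U N ((x i * v) ⊗ₜ[k] (y i • n))) :
    -- (1) the balancing identity `(un ⊗_A p) ⊗_{Uᵒᵖ} m = (n ⊗_A u_- p) ⊗_{Uᵒᵖ} m u_+`
    (∀ (u : U) (n : N) (p : P) (m : M) (ℓ : ℕ) (x y : Fin ℓ → U),
      πOp k A U t (∑ i, x i ⊗ₜ[k] y i) = H.βinv (π2 k A U s t (u ⊗ₜ[k] 1)) →
      (copRel k U M (TMod k A U s t N P) act).mkQ
          ((πMod k A U s t N P ((u • n) ⊗ₜ[k] p)) ⊗ₜ[k] m) =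
        ∑ i, (copRel k U M (TMod k A U s t N P) act).mkQ
          ((πMod k A U s t N P (n ⊗ₜ[k] (y i • p))) ⊗ₜ[k] ((op (x i)) • m))) ∧
    -- (2) the isomorphism `(U ⊗_A N) ⊗_{Uᵒᵖ} M ≅ N ⊗_A M`
    (∃ φ : ((TMod k A U s t U N ⊗[k] M) ⧸ copRel k U M (TMod k A U s t U N) actU)
        ≃ₗ[k] ((N ⊗[k] M) ⧸ modRelNM k A U t N M),
      (∀ (n : N) (m : M),
        φ.symm ((modRelNM k A U t N M).mkQ (n ⊗ₜ[k] m)) =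
          (copRel k U M (TMod k A U s t U N) actU).mkQ
            ((πMod k A U s t U N ((1 : U) ⊗ₜ[k] n)) ⊗ₜ[k] m)) ∧
      (∀ (u : U) (n : N) (m : M) (ℓ : ℕ) (x y : Fin ℓ → U),
        πOp k A U t (∑ i, x i ⊗ₜ[k] y i) = H.βinv (π2 k A U s t (u ⊗ₜ[k] 1)) →
        φ ((copRel k U M (TMod k A U s t U N) actU).mkQ
            ((πMod k A U s t U N (u ⊗ₜ[k] n)) ⊗ₜ[k] m)) =
          ∑ i, (modRelNM k A U t N M).mkQ ((y i • n) ⊗ₜ[k] ((op (x i)) • m)))) := by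
  obtain rfl := B.eq_diagAct hact
  obtain rfl := B.eq_diagAct hactU
  exact ⟨fun u n p m ℓ x y h => H.mkQ_copRel_smul_tmul_eq_sum h n p m, H.cancelEquiv N M,
    H.insertOne_mkQ_tmul, fun u n m ℓ x y h => H.cancelEquiv_mkQ_tmul h n m⟩

end Stmt19
end
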